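/- arXiv:1308.2656 — 2 statements merged into one kernel-verified Lean document; each statement's English description precedes it below -/
import Mathlib

section
/- Let p ∈ (0,1) and let (f_n)_{n≥1} be any sequence of functions f_n : {0,1}^n → [0,1]. Then (f_n)_{n≥1} is noise sensitive at intensity p if and only if for every r ∈ (p,1), lim_{n→∞} Var_r(E_{p/r}[f_n(ψ·ξ) | ψ]) = 0. -/
/-!
Let `ψ ∼ ℙ_r` and let `ξ, ζ ∼ ℙ_{p/r}` be independent copies. Both `(ψ·ξ, ψ·ζ)` and `(ω, ω^ε)` have
i.i.d. coordinate pairs with Bernoulli(`p`) marginals, so their laws agree once the probability of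
the pair `(1, 1)` does: this probability is `p * (p / r)` for the former and `p * (1 - ε * (1 - p))`
for the latter. When `p / r = 1 - ε * (1 - p)`, the variance of the conditional expectation given
`ψ` is therefore equal to the noise covariance at level `ε`, for each fixed `n`, and this relation
is a bijection between `ε ∈ (0, 1)` and `r ∈ (p, 1)`.
-/

open Finset Filter

namespace PartialObs

/-- Weight of a configuration `ω ∈ {0,1}^n` under the product measure `ℙ_p`. -/
noncomputable def w {n : ℕ} (p : ℝ) (ω : Fin n → Bool) : ℝ :=
  ∏ i, if ω i then p else 1 - p

/-- Expectation with respect to `ℙ_p`. -/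
noncomputable def E {n : ℕ} (p : ℝ) (f : (Fin n → Bool) → ℝ) : ℝ :=
  ∑ ω : Fin n → Bool, w p ω * f ω

/-- Variance with respect to `ℙ_p`. -/
noncomputable def Var {n : ℕ} (p : ℝ) (f : (Fin n → Bool) → ℝ) : ℝ :=
  E p (fun ω => (f ω - E p f) ^ 2)

/-- Coordinatewise product `ψ·ξ` of two configurations. -/
def prodCfg {n : ℕ} (ψ ξ : Fin n → Bool) : Fin n → Bool := fun i => ψ i && ξ i

/-- The conditional expectation `E_{p/r}[f(ψ·ξ) | ψ]`, as a function of `ψ`: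
`ξ` is integrated out according to `ℙ_{p/r}`. -/
noncomputable def condExp {n : ℕ} (p r : ℝ) (f : (Fin n → Bool) → ℝ)
    (ψ : Fin n → Bool) : ℝ :=
  E (p / r) (fun ξ => f (prodCfg ψ ξ))

/-- Joint probability mass of the pair `(ω, ω^ε)` at `(a, b)`, where `ω ∼ ℙ_p` and
`ω^ε` is obtained from `ω` by independently resampling each coordinate with
probability `ε` (the resampled value being `1` with probability `p`). -/
noncomputable def pairW {n : ℕ} (p ε : ℝ) (a b : Fin n → Bool) : ℝ :=
  ∏ i, (if a i then p else 1 - p) *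
    ((1 - ε) * (if a i = b i then 1 else 0) + ε * (if b i then p else 1 - p))

/-- Expectation `E_p[F(ω, ω^ε)]` over the joint law of `(ω, ω^ε)`. -/
noncomputable def E2 {n : ℕ} (p ε : ℝ)
    (F : (Fin n → Bool) → (Fin n → Bool) → ℝ) : ℝ :=
  ∑ a : Fin n → Bool, ∑ b : Fin n → Bool, pairW p ε a b * F a b

/-- The quantity `E_p[f(ω) f(ω^ε)] − E_p[f(ω)]²`. -/
noncomputable def noiseCov {n : ℕ} (p ε : ℝ) (f : (Fin n → Bool) → ℝ) : ℝ :=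
  E2 p ε (fun a b => f a * f b) - (E p f) ^ 2

/-- Noise sensitivity at intensity `p`: for every `ε ∈ (0,1)`,
`E_p[f_n(ω) f_n(ω^ε)] − E_p[f_n(ω)]² → 0` as `n → ∞`. -/
def NS (p : ℝ) (f : ∀ n, (Fin n → Bool) → ℝ) : Prop :=
  ∀ ε ∈ Set.Ioo (0 : ℝ) 1,
    Tendsto (fun n => noiseCov p ε (f n)) atTop (nhds 0)

section ProductMeasure

variable {n : ℕ}

lemma sum_w (p : ℝ) : ∑ ω : Fin n → Bool, w p ω = 1 := by
  simp only [w, ← Fintype.prod_sum fun (_ : Fin n) (x : Bool) => if x then p else 1 - p]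
  simp

lemma E_sum_mul {ι : Type*} (s : Finset ι) (p : ℝ) (g : ι → (Fin n → Bool) → ℝ) (c : ι → ℝ) :
    E p (fun ω => ∑ a ∈ s, g a ω * c a) = ∑ a ∈ s, E p (g a) * c a := by
  simp only [E, mul_sum, sum_mul, mul_assoc]
  exact sum_comm

lemma Var_eq_E_sq_sub_sq (p : ℝ) (g : (Fin n → Bool) → ℝ) :
    Var p g = E p (fun ω => g ω ^ 2) - E p g ^ 2 := by
  have expand (c : ℝ) : E p (fun ω => (g ω - c) ^ 2) =
      E p (fun ω => g ω ^ 2) - 2 * c * E p g + c ^ 2 * ∑ ω : Fin n → Bool, w p ω := by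
    simp only [E, mul_sum, ← sum_sub_distrib, ← sum_add_distrib]
    exact sum_congr rfl fun ω _ => by ring
  rw [Var, expand, sum_w]
  ring

end ProductMeasure

section Thinning

variable {n : ℕ}

/-- Transition probability of thinning: the probability that `ψ·ξ = a` when `ξ ∼ ℙ_q`. -/
noncomputable def thinW (q : ℝ) (ψ a : Fin n → Bool) : ℝ :=
  ∑ ξ with prodCfg ψ ξ = a, w q ξ

lemma E_prodCfg_eq_sum_thinW (q : ℝ) (f : (Fin n → Bool) → ℝ) (ψ : Fin n → Bool) :
    E q (fun ξ => f (prodCfg ψ ξ)) = ∑ a, thinW q ψ a * f a := by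
  simp only [E, thinW, sum_mul]
  rw [← sum_fiberwise univ (prodCfg ψ)]
  refine sum_congr rfl fun a _ => sum_congr rfl fun ξ hξ => ?_
  rw [(mem_filter.1 hξ).2]

lemma thinW_eq_prod (q : ℝ) (ψ a : Fin n → Bool) :
    thinW q ψ a =
      ∏ i, if ψ i then (if a i then q else 1 - q) else (if a i then 0 else 1) := by
  have fiber_eq_pi : ({ξ | prodCfg ψ ξ = a} : Finset (Fin n → Bool)) =
      Fintype.piFinset fun i => {x | (ψ i && x) = a i} := by
    ext ξ
    simp [prodCfg, funext_iff]
  simp only [thinW, w, fiber_eq_pi]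
  rw [← prod_univ_sum _ fun _ (x : Bool) => if x then q else 1 - q]
  refine prod_congr rfl fun i _ => ?_
  cases ψ i <;> cases a i <;> simp [sum_filter]

lemma E_thinW (r q : ℝ) (a : Fin n → Bool) : E r (fun ψ => thinW q ψ a) = w (r * q) a := by
  simp only [E, w, thinW_eq_prod, ← prod_mul_distrib]
  rw [← Fintype.prod_sum fun i (y : Bool) => (if y then r else 1 - r) *
    if y then (if a i then q else 1 - q) else (if a i then 0 else 1)]
  refine prod_congr rfl fun i _ => ?_
  cases a i <;> simp only [Fintype.sum_bool, if_true, if_false, Bool.false_eq_true] <;> ring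

lemma E_thinW_mul_thinW {r q ε : ℝ} (hq : q = 1 - ε * (1 - r * q)) (a b : Fin n → Bool) :
    E r (fun ψ => thinW q ψ a * thinW q ψ b) = pairW (r * q) ε a b := by
  simp only [E, w, pairW, thinW_eq_prod, ← prod_mul_distrib]
  rw [← Fintype.prod_sum fun i (y : Bool) => (if y then r else 1 - r) *
    ((if y then (if a i then q else 1 - q) else (if a i then 0 else 1)) *
      if y then (if b i then q else 1 - q) else (if b i then 0 else 1))]
  refine prod_congr rfl fun i _ => ?_
  rcases a i <;> rcases b i <;>
    simp only [Fintype.sum_bool, if_true, if_false, Bool.false_eq_true, Bool.true_eq_false]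
  · linear_combination r * q * hq
  · linear_combination -(r * q) * hq
  · linear_combination -(r * q) * hq
  · linear_combination r * q * hq

end Thinning

section ConditionalExpectation

variable {n : ℕ} {p r : ℝ}

lemma E_condExp (hr : r ≠ 0) (f : (Fin n → Bool) → ℝ) : E r (condExp p r f) = E p f :=
  calc E r (condExp p r f)
      = E r (fun ψ => ∑ a, thinW (p / r) ψ a * f a) :=
        congrArg (E r) (funext (E_prodCfg_eq_sum_thinW _ f))
    _ = ∑ a, w (r * (p / r)) a * f a := by simp only [E_sum_mul, E_thinW]
    _ = E p f := by rw [mul_div_cancel₀ p hr, E]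

lemma E_condExp_sq {ε : ℝ} (hr : r ≠ 0) (hε : p / r = 1 - ε * (1 - p))
    (f : (Fin n → Bool) → ℝ) :
    E r (fun ψ => condExp p r f ψ ^ 2) = E2 p ε (fun a b => f a * f b) := by
  have hp : r * (p / r) = p := mul_div_cancel₀ p hr
  have joint_law (a b : Fin n → Bool) :
      E r (fun ψ => thinW (p / r) ψ a * thinW (p / r) ψ b) = pairW p ε a b := by
    rw [E_thinW_mul_thinW (by rwa [hp]), hp]
  calc E r (fun ψ => condExp p r f ψ ^ 2)
      = E r (fun ψ => ∑ ab : (Fin n → Bool) × (Fin n → Bool),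
          (thinW (p / r) ψ ab.1 * thinW (p / r) ψ ab.2) * (f ab.1 * f ab.2)) := by
        simp only [condExp, E_prodCfg_eq_sum_thinW, sq, sum_mul_sum, Fintype.sum_prod_type,
          mul_mul_mul_comm]
    _ = ∑ ab : (Fin n → Bool) × (Fin n → Bool), pairW p ε ab.1 ab.2 * (f ab.1 * f ab.2) := by
        simp only [E_sum_mul, joint_law]
    _ = E2 p ε (fun a b => f a * f b) := Fintype.sum_prod_type _

lemma Var_condExp_eq_noiseCov {ε : ℝ} (hr : r ≠ 0) (hε : p / r = 1 - ε * (1 - p))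
    (f : (Fin n → Bool) → ℝ) : Var r (condExp p r f) = noiseCov p ε f := by
  rw [Var_eq_E_sq_sub_sq, E_condExp hr, E_condExp_sq hr hε, noiseCov]

end ConditionalExpectation

section MatchingIntensity

/-- The observation intensity `r` that corresponds to the noise level `ε`, that is, the solution
of `p / r = 1 - ε * (1 - p)`. -/
noncomputable def matchingIntensity (p ε : ℝ) : ℝ :=
  p / (1 - ε * (1 - p))

variable {p : ℝ}

lemma image_matchingIntensity_Ioo (hp : p ∈ Set.Ioo (0 : ℝ) 1) :
    matchingIntensity p '' Set.Ioo 0 1 = Set.Ioo p 1 := by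
  obtain ⟨hp0, hp1⟩ := hp
  have hp1' : 0 < 1 - p := sub_pos.2 hp1
  ext r
  constructor
  · rintro ⟨ε, ⟨hε0, hε1⟩, rfl⟩
    have hlt : p < 1 - ε * (1 - p) := by linarith [mul_lt_of_lt_one_left hp1' hε1]
    have hlt_one : 1 - ε * (1 - p) < 1 := sub_lt_self 1 (mul_pos hε0 hp1')
    exact ⟨(lt_div_iff₀ (hp0.trans hlt)).2 (mul_lt_of_lt_one_right hp0 hlt_one),
      (div_lt_one (hp0.trans hlt)).2 hlt⟩
  · rintro ⟨hpr, hr1⟩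
    have hr : 0 < r := hp0.trans hpr
    refine ⟨(1 - p / r) / (1 - p), ⟨?_, ?_⟩, ?_⟩
    · exact div_pos (sub_pos.2 ((div_lt_one hr).2 hpr)) hp1'
    · have hlt : p < p / r := (lt_div_iff₀ hr).2 (mul_lt_of_lt_one_right hp0 hr1)
      exact (div_lt_one hp1').2 (sub_lt_sub_left hlt 1)
    · rw [matchingIntensity, div_mul_cancel₀ _ hp1'.ne', sub_sub_cancel, div_div_cancel₀ hp0.ne']

lemma Var_condExp_matchingIntensity {n : ℕ} {ε : ℝ} (hr : matchingIntensity p ε ≠ 0)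
    (f : (Fin n → Bool) → ℝ) :
    Var (matchingIntensity p ε) (condExp p (matchingIntensity p ε) f) = noiseCov p ε f :=
  Var_condExp_eq_noiseCov hr (div_div_cancel₀ (div_ne_zero_iff.1 hr).1) f

end MatchingIntensity

theorem NS_iff_asymptotically_clueless_general {p : ℝ} (hp : p ∈ Set.Ioo (0 : ℝ) 1)
    (f : ∀ n, (Fin n → Bool) → ℝ) :
    NS p f ↔ ∀ r ∈ Set.Ioo p 1,
      Tendsto (fun n => Var r (condExp p r (f n))) atTop (nhds 0) := by
  rw [NS, ← image_matchingIntensity_Ioo hp, Set.forall_mem_image]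
  refine forall₂_congr fun ε hε => ?_
  have hr : matchingIntensity p ε ∈ Set.Ioo p 1 :=
    image_matchingIntensity_Ioo hp ▸ Set.mem_image_of_mem _ hε
  simp only [Var_condExp_matchingIntensity (hp.1.trans hr.1).ne']

/-- `(f_n)` is noise sensitive at intensity `p` iff for every
`r ∈ (p,1)`, `Var_r(E_{p/r}[f_n(ψ·ξ) | ψ]) → 0` as `n → ∞`. -/
theorem NS_iff_asymptotically_clueless (p : ℝ) (hp : p ∈ Set.Ioo (0 : ℝ) 1)
    (f : ∀ n, (Fin n → Bool) → ℝ)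
    (hf : ∀ n ω, f n ω ∈ Set.Icc (0 : ℝ) 1) :
    NS p f ↔ ∀ r ∈ Set.Ioo p 1,
      Tendsto (fun n => Var r (condExp p r (f n))) atTop (nhds 0) :=
  NS_iff_asymptotically_clueless_general hp f

end PartialObs
end

section
/- Let 0 < p < r < 1 and let (f_n)_{n≥1} be a sequence of functions f_n : {0,1}^n → [0,1]. Then lim_{n→∞} Var_r(E_{p/r}[f_n(ψ·ξ) | ψ]) = 0 if and only if for every k ∈ ℕ, lim_{n→∞} Σ_{S ⊆ {1,…,n}, 0 < |S| ≤ k} f̂_n^p(S)² = 0. -/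
/-!
The biased characters are orthonormal for `ℙ_p`, and averaging over `ξ` sends each character at `p`
to a multiple of the one at `r`: `E_{p/r}[χ_S^p(ψ·ξ) | ψ] = c^|S| χ_S^r(ψ)`, where `c ∈ (0, 1)` is
the ratio of `√(p / (1 - p))` to `√(r / (1 - r))`. By Parseval the variance of the conditional
expectation is therefore `∑_{S ≠ ∅} c^(2|S|) f̂^p(S)²`. With `L_k` the Fourier mass on
`0 < |S| ≤ k`, splitting at level `k` gives
`c^(2k) L_k ≤ Var_r(E_{p/r}[f(ψ·ξ) | ψ]) ≤ L_k + c^(2k) Var_p(f)`, and both implications can be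
read off: the first at fixed `k`, the second by letting `k → ∞` after `n → ∞`.
-/

open Finset Filter

namespace PartialObs

/-- The character `χ_S^p(ω) = ∏_{i ∈ S} χ_i^p(ω)`, where `χ_i^p(ω) = -√((1-p)/p)`
if `ω_i = 1` and `√(p/(1-p))` if `ω_i = 0`. -/
noncomputable def chi {n : ℕ} (p : ℝ) (S : Finset (Fin n)) (ω : Fin n → Bool) : ℝ :=
  ∏ i ∈ S, if ω i then -Real.sqrt ((1 - p) / p) else Real.sqrt (p / (1 - p))

/-- The Fourier coefficient `f̂^p(S) = E_p[f · χ_S^p]`. -/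
noncomputable def fourier {n : ℕ} (p : ℝ) (f : (Fin n → Bool) → ℝ)
    (S : Finset (Fin n)) : ℝ :=
  E p (fun ω => f ω * chi p S ω)

section Expectation

variable {n : ℕ}

lemma E_add (p : ℝ) (f g : (Fin n → Bool) → ℝ) :
    E p (fun ω => f ω + g ω) = E p f + E p g := by
  simp only [E, mul_add, sum_add_distrib]

lemma E_const_mul (p a : ℝ) (f : (Fin n → Bool) → ℝ) :
    E p (fun ω => a * f ω) = a * E p f := by
  simp only [E, mul_sum, mul_left_comm]

lemma E_sum {ι : Type*} (p : ℝ) (s : Finset ι) (f : ι → (Fin n → Bool) → ℝ) :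
    E p (fun ω => ∑ j ∈ s, f j ω) = ∑ j ∈ s, E p (f j) := by
  simp only [E, mul_sum]
  exact sum_comm

lemma E_prod (p : ℝ) (S : Finset (Fin n)) (g : Fin n → Bool → ℝ) :
    E p (fun ω => ∏ i ∈ S, g i (ω i)) = ∏ i ∈ S, (p * g i true + (1 - p) * g i false) := by
  have extend_prod (h : Fin n → ℝ) : ∏ i ∈ S, h i = ∏ i, if i ∈ S then h i else 1 := by
    rw [prod_ite_mem, univ_inter]
  calc E p (fun ω => ∏ i ∈ S, g i (ω i))
      = ∑ ω : Fin n → Bool,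
          ∏ i, (if ω i then p else 1 - p) * (if i ∈ S then g i (ω i) else 1) := by
        simp only [E, w, extend_prod, prod_mul_distrib]
    _ = ∏ i, ∑ b : Bool, (if b then p else 1 - p) * (if i ∈ S then g i b else 1) := by
        rw [prod_univ_sum, Fintype.piFinset_univ]
    _ = ∏ i ∈ S, (p * g i true + (1 - p) * g i false) := by
        rw [extend_prod]
        refine prod_congr rfl fun i _ => ?_
        by_cases hi : i ∈ S <;> simp [hi]

lemma E_const (p a : ℝ) : E (n := n) p (fun _ => a) = a := by
  have total_mass : E (n := n) p (fun _ => 1) = 1 := by simpa using E_prod (n := n) p ∅ fun _ _ => 1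
  simpa [total_mass] using E_const_mul (n := n) p a fun _ => 1

lemma w_nonneg {p : ℝ} (hp₀ : 0 ≤ p) (hp₁ : p ≤ 1) (ω : Fin n → Bool) : 0 ≤ w p ω :=
  prod_nonneg fun i _ => by split_ifs <;> linarith

lemma E_mono {p : ℝ} (hp₀ : 0 ≤ p) (hp₁ : p ≤ 1) {f g : (Fin n → Bool) → ℝ}
    (hfg : ∀ ω, f ω ≤ g ω) : E p f ≤ E p g :=
  sum_le_sum fun ω _ => mul_le_mul_of_nonneg_left (hfg ω) (w_nonneg hp₀ hp₁ ω)

lemma E_mem_Icc {p a b : ℝ} (hp₀ : 0 ≤ p) (hp₁ : p ≤ 1) {f : (Fin n → Bool) → ℝ}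
    (hf : ∀ ω, f ω ∈ Set.Icc a b) : E p f ∈ Set.Icc a b :=
  ⟨(E_const p a).symm.trans_le (E_mono hp₀ hp₁ fun ω => (hf ω).1),
    (E_mono hp₀ hp₁ fun ω => (hf ω).2).trans_eq (E_const p b)⟩

lemma Var_nonneg {p : ℝ} (hp₀ : 0 ≤ p) (hp₁ : p ≤ 1) (f : (Fin n → Bool) → ℝ) : 0 ≤ Var p f :=
  sum_nonneg fun ω _ => mul_nonneg (w_nonneg hp₀ hp₁ ω) (sq_nonneg _)

lemma Var_eq_E_sq_sub_sq_E (p : ℝ) (f : (Fin n → Bool) → ℝ) :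
    Var p f = E p (fun ω => f ω ^ 2) - E p f ^ 2 := by
  have expand_sq : (fun ω => (f ω - E p f) ^ 2)
      = fun ω => (f ω ^ 2 + (-2 * E p f) * f ω) + E p f ^ 2 := by
    funext ω; ring
  rw [Var, expand_sq, E_add, E_add, E_const_mul, E_const]
  ring

lemma Var_le_sq_sub {p a b : ℝ} (hp₀ : 0 ≤ p) (hp₁ : p ≤ 1) {f : (Fin n → Bool) → ℝ}
    (hf : ∀ ω, f ω ∈ Set.Icc a b) : Var p f ≤ (b - a) ^ 2 := by
  have hE := E_mem_Icc hp₀ hp₁ hf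
  calc Var p f ≤ E (n := n) p (fun _ => (b - a) ^ 2) := E_mono hp₀ hp₁ fun ω => by
        rw [sq_le_sq]
        exact (abs_sub_le_of_le_of_le (hf ω).1 (hf ω).2 hE.1 hE.2).trans (le_abs_self _)
    _ = (b - a) ^ 2 := E_const p _

end Expectation

section CoordinateCharacter

/-- The character `χ_i^p` of a single coordinate, as a function of the value `ω_i`. -/
noncomputable def coordChi (p : ℝ) (b : Bool) : ℝ :=
  if b then -√((1 - p) / p) else √(p / (1 - p))

lemma chi_eq_prod_coordChi {n : ℕ} (p : ℝ) (S : Finset (Fin n)) (ω : Fin n → Bool) :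
    chi p S ω = ∏ i ∈ S, coordChi p (ω i) := rfl

variable {p r : ℝ}

lemma coordChi_false_pos (hp₀ : 0 < p) (hp₁ : p < 1) : 0 < coordChi p false :=
  Real.sqrt_pos.2 (div_pos hp₀ (sub_pos.2 hp₁))

lemma coordChi_false_sq (hp₀ : 0 ≤ p) (hp₁ : p ≤ 1) : coordChi p false ^ 2 = p / (1 - p) :=
  Real.sq_sqrt (div_nonneg hp₀ (sub_nonneg.2 hp₁))

lemma coordChi_true (hp₀ : 0 < p) (hp₁ : p < 1) :
    coordChi p true = -((1 - p) / p * coordChi p false) := by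
  have hq : 0 < 1 - p := sub_pos.2 hp₁
  have true_eq_neg_inv : coordChi p true = -(coordChi p false)⁻¹ := by
    simp [coordChi, ← Real.sqrt_inv]
  rw [true_eq_neg_inv, neg_inj]
  refine inv_eq_of_mul_eq_one_left ?_
  rw [mul_assoc, ← sq, coordChi_false_sq hp₀.le hp₁.le]
  field_simp

lemma coordChi_mean (hp₀ : 0 < p) (hp₁ : p < 1) :
    p * coordChi p true + (1 - p) * coordChi p false = 0 := by
  rw [coordChi_true hp₀ hp₁]
  field_simp
  ring

lemma coordChi_second_moment (hp₀ : 0 < p) (hp₁ : p < 1) :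
    p * coordChi p true ^ 2 + (1 - p) * coordChi p false ^ 2 = 1 := by
  have hq : 0 < 1 - p := sub_pos.2 hp₁
  rw [coordChi_true hp₀ hp₁, neg_sq, mul_pow, coordChi_false_sq hp₀.le hp₁.le]
  field_simp
  ring

/-- The factor `c` by which averaging over `ξ` contracts the character of a single coordinate; it
is the correlation of `ψ_i` with `ψ_i ξ_i`. -/
noncomputable def damping (p r : ℝ) : ℝ := coordChi p false / coordChi r false

lemma damping_pos (hp : 0 < p) (hpr : p < r) (hr : r < 1) : 0 < damping p r :=
  div_pos (coordChi_false_pos hp (hpr.trans hr)) (coordChi_false_pos (hp.trans hpr) hr)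

lemma damping_lt_one (hp : 0 < p) (hpr : p < r) (hr : r < 1) : damping p r < 1 := by
  have hr' : 0 < 1 - r := sub_pos.2 hr
  have odds_lt : p / (1 - p) < r / (1 - r) :=
    div_lt_div₀ hpr (by linarith) (hp.trans hpr).le hr'
  exact (div_lt_one (coordChi_false_pos (hp.trans hpr) hr)).2
    (Real.sqrt_lt_sqrt (div_nonneg hp.le (by linarith)) odds_lt)

lemma damping_sq_lt_one (hp : 0 < p) (hpr : p < r) (hr : r < 1) : damping p r ^ 2 < 1 :=
  pow_lt_one₀ (damping_pos hp hpr hr).le (damping_lt_one hp hpr hr) two_ne_zero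

lemma coordChi_average_and (hp : 0 < p) (hpr : p < r) (hr : r < 1) (a : Bool) :
    p / r * coordChi p (a && true) + (1 - p / r) * coordChi p (a && false)
      = damping p r * coordChi r a := by
  have hr₀ : 0 < r := hp.trans hpr
  have hχ : damping p r * coordChi r false = coordChi p false :=
    div_mul_cancel₀ _ (coordChi_false_pos hr₀ hr).ne'
  cases a with
  | false =>
    rw [hχ, Bool.false_and, Bool.false_and]
    ring
  | true =>
    rw [Bool.true_and, Bool.true_and, coordChi_true hp (hpr.trans hr), coordChi_true hr₀ hr,
      mul_neg (damping p r), mul_left_comm (damping p r), hχ]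
    field_simp
    ring

end CoordinateCharacter

section FourierAnalysis

variable {n : ℕ} {p : ℝ}

lemma E_chi_mul_chi (hp₀ : 0 < p) (hp₁ : p < 1) (S T : Finset (Fin n)) :
    E p (fun ω => chi p S ω * chi p T ω) = if S = T then 1 else 0 := by
  let g (i : Fin n) (b : Bool) : ℝ :=
    (if i ∈ S then coordChi p b else 1) * (if i ∈ T then coordChi p b else 1)
  have chi_mul_chi (ω : Fin n → Bool) : chi p S ω * chi p T ω = ∏ i, g i (ω i) := by
    simp only [g, prod_mul_distrib, prod_ite_mem, univ_inter, chi_eq_prod_coordChi]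
  have mean_coord (i : Fin n) :
      p * g i true + (1 - p) * g i false = if i ∈ S ↔ i ∈ T then 1 else 0 := by
    have h₁ := coordChi_mean hp₀ hp₁
    have h₂ := coordChi_second_moment hp₀ hp₁
    by_cases hS : i ∈ S <;> by_cases hT : i ∈ T <;> simp [g, hS, hT, ← sq, h₁, h₂]
  simp only [chi_mul_chi, E_prod, mean_coord, prod_ite_zero, prod_const_one, mem_univ,
    true_imp_iff, Finset.ext_iff]

/-- Completeness of the characters, from their orthonormality by counting dimensions: there are as
many subsets of `Fin n` as configurations. -/
lemma sum_chi_mul_w_mul_chi (hp₀ : 0 < p) (hp₁ : p < 1) (ω η : Fin n → Bool) :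
    ∑ S, chi p S ω * (w p η * chi p S η) = if ω = η then 1 else 0 := by
  let A : Matrix (Finset (Fin n)) (Fin n → Bool) ℝ := .of fun S η => w p η * chi p S η
  let B : Matrix (Fin n → Bool) (Finset (Fin n)) ℝ := .of fun ω S => chi p S ω
  have orthonormal : A * B = 1 := by
    ext S T
    simpa [A, B, Matrix.mul_apply, Matrix.one_apply, E, mul_assoc] using E_chi_mul_chi hp₀ hp₁ S T
  have complete : B * A = 1 := (Matrix.mul_eq_one_comm_of_card_eq _ _ _ (by simp)).1 orthonormal
  simpa [A, B, Matrix.mul_apply, Matrix.one_apply] using congrFun₂ complete ω η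

lemma sum_fourier_mul_chi (hp₀ : 0 < p) (hp₁ : p < 1) (f : (Fin n → Bool) → ℝ)
    (ω : Fin n → Bool) : ∑ S, fourier p f S * chi p S ω = f ω := by
  calc ∑ S, fourier p f S * chi p S ω
      = ∑ η, f η * ∑ S, chi p S ω * (w p η * chi p S η) := by
        simp only [fourier, E, sum_mul, mul_sum]
        rw [sum_comm]
        exact sum_congr rfl fun η _ => sum_congr rfl fun S _ => by ring
    _ = f ω := by simp [sum_chi_mul_w_mul_chi hp₀ hp₁]

lemma fourier_sum_mul_chi (hp₀ : 0 < p) (hp₁ : p < 1) (a : Finset (Fin n) → ℝ)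
    (T : Finset (Fin n)) : fourier p (fun ω => ∑ S, a S * chi p S ω) T = a T := by
  simp [fourier, sum_mul, mul_assoc, E_sum, E_const_mul, E_chi_mul_chi hp₀ hp₁]

lemma fourier_empty (p : ℝ) (f : (Fin n → Bool) → ℝ) : fourier p f ∅ = E p f := by
  simp [fourier, chi]

lemma parseval (hp₀ : 0 < p) (hp₁ : p < 1) (f : (Fin n → Bool) → ℝ) :
    E p (fun ω => f ω ^ 2) = ∑ S, fourier p f S ^ 2 := by
  calc E p (fun ω => f ω ^ 2)
      = E p (fun ω => ∑ S, fourier p f S * (f ω * chi p S ω)) := by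
        congr 1 with ω
        simp only [mul_left_comm, ← mul_sum, sum_fourier_mul_chi hp₀ hp₁, sq]
    _ = ∑ S, fourier p f S ^ 2 := by
        simp only [E_sum, E_const_mul, sq, fourier]

lemma Var_eq_sum_fourier_sq (hp₀ : 0 < p) (hp₁ : p < 1) (f : (Fin n → Bool) → ℝ) :
    Var p f = ∑ S with S ≠ ∅, fourier p f S ^ 2 := by
  rw [Var_eq_E_sq_sub_sq_E, parseval hp₀ hp₁, ← fourier_empty, filter_ne',
    ← sum_erase_add _ _ (mem_univ ∅), add_sub_cancel_right]

end FourierAnalysis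

section LowLevels

/-- The Fourier mass of `f` on the non-empty sets of size at most `k`. -/
noncomputable def lowLevelMass {n : ℕ} (p : ℝ) (f : (Fin n → Bool) → ℝ) (k : ℕ) : ℝ :=
  ∑ S with S ≠ ∅ ∧ #S ≤ k, fourier p f S ^ 2

variable {n : ℕ} {p r : ℝ}

lemma lowLevelMass_nonneg (p : ℝ) (f : (Fin n → Bool) → ℝ) (k : ℕ) : 0 ≤ lowLevelMass p f k :=
  sum_nonneg fun _ _ => sq_nonneg _

lemma lowLevelMass_eq_sum_ite (p : ℝ) (f : (Fin n → Bool) → ℝ) (k : ℕ) :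
    lowLevelMass p f k = ∑ S with S ≠ ∅, if #S ≤ k then fourier p f S ^ 2 else 0 := by
  rw [lowLevelMass, ← filter_filter, sum_filter]

lemma condExp_chi (hp : 0 < p) (hpr : p < r) (hr : r < 1) (S : Finset (Fin n))
    (ψ : Fin n → Bool) : condExp p r (chi p S) ψ = damping p r ^ #S * chi r S ψ := by
  simp only [condExp, prodCfg, chi_eq_prod_coordChi]
  rw [E_prod (p / r) S fun i b => coordChi p (ψ i && b)]
  simp only [coordChi_average_and hp hpr hr, prod_mul_distrib, prod_const]

lemma fourier_condExp (hp : 0 < p) (hpr : p < r) (hr : r < 1) (f : (Fin n → Bool) → ℝ)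
    (S : Finset (Fin n)) : fourier r (condExp p r f) S = damping p r ^ #S * fourier p f S := by
  have expansion : condExp p r f
      = fun ψ => ∑ T, (damping p r ^ #T * fourier p f T) * chi r T ψ := by
    funext ψ
    calc condExp p r f ψ = condExp p r (fun ω => ∑ T, fourier p f T * chi p T ω) ψ := by
          simp only [sum_fourier_mul_chi hp (hpr.trans hr)]
      _ = ∑ T, fourier p f T * condExp p r (chi p T) ψ := by
          simp only [condExp, E_sum, E_const_mul]
      _ = ∑ T, (damping p r ^ #T * fourier p f T) * chi r T ψ := by
          simp only [condExp_chi hp hpr hr, mul_left_comm, mul_assoc]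
  rw [expansion, fourier_sum_mul_chi (hp.trans hpr) hr]

lemma Var_condExp (hp : 0 < p) (hpr : p < r) (hr : r < 1) (f : (Fin n → Bool) → ℝ) :
    Var r (condExp p r f) = ∑ S with S ≠ ∅, (damping p r ^ 2) ^ #S * fourier p f S ^ 2 := by
  simp only [Var_eq_sum_fourier_sq (hp.trans hpr) hr, fourier_condExp hp hpr hr, mul_pow,
    pow_right_comm]

lemma damping_pow_mul_lowLevelMass_le (hp : 0 < p) (hpr : p < r) (hr : r < 1)
    (f : (Fin n → Bool) → ℝ) (k : ℕ) :
    (damping p r ^ 2) ^ k * lowLevelMass p f k ≤ Var r (condExp p r f) := by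
  have hc : damping p r ^ 2 ≤ 1 := (damping_sq_lt_one hp hpr hr).le
  rw [Var_condExp hp hpr hr, lowLevelMass_eq_sum_ite, mul_sum]
  refine sum_le_sum fun S _ => ?_
  split_ifs with hS
  · exact mul_le_mul_of_nonneg_right (pow_le_pow_of_le_one (sq_nonneg _) hc hS) (sq_nonneg _)
  · rw [mul_zero]
    positivity

lemma Var_condExp_le (hp : 0 < p) (hpr : p < r) (hr : r < 1)
    (f : (Fin n → Bool) → ℝ) (k : ℕ) :
    Var r (condExp p r f) ≤ lowLevelMass p f k + (damping p r ^ 2) ^ k * Var p f := by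
  have hc : damping p r ^ 2 ≤ 1 := (damping_sq_lt_one hp hpr hr).le
  rw [Var_condExp hp hpr hr, Var_eq_sum_fourier_sq hp (hpr.trans hr), lowLevelMass_eq_sum_ite,
    mul_sum, ← sum_add_distrib]
  refine sum_le_sum fun S _ => ?_
  split_ifs with hS
  · exact le_add_of_le_of_nonneg
      (mul_le_of_le_one_left (sq_nonneg _) (pow_le_one₀ (sq_nonneg _) hc)) (by positivity)
  · rw [zero_add]
    exact mul_le_mul_of_nonneg_right
      (pow_le_pow_of_le_one (sq_nonneg _) hc (not_le.1 hS).le) (sq_nonneg _)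

end LowLevels

section Limits

variable {ι : Type*} {l : Filter ι}

lemma tendsto_zero_of_forall_le_add {u : ι → ℝ} {v : ℕ → ι → ℝ} {b : ℕ → ℝ}
    (hu : ∀ i, 0 ≤ u i) (huv : ∀ k, ∀ᶠ i in l, u i ≤ v k i + b k)
    (hv : ∀ k, Tendsto (v k) l (nhds 0)) (hb : Tendsto b atTop (nhds 0)) :
    Tendsto u l (nhds 0) := by
  refine tendsto_order.2 ⟨fun a ha => .of_forall fun i => ha.trans_le (hu i), fun ε hε => ?_⟩
  obtain ⟨k, hk⟩ := (hb.eventually_lt_const (half_pos hε)).exists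
  filter_upwards [huv k, (hv k).eventually_lt_const (half_pos hε)] with i hi hvi
  linarith

variable {N : ι → ℕ} {p r : ℝ} {f : ∀ i, (Fin (N i) → Bool) → ℝ}

lemma tendsto_lowLevelMass_zero (hp : 0 < p) (hpr : p < r) (hr : r < 1)
    (h : Tendsto (fun i => Var r (condExp p r (f i))) l (nhds 0)) (k : ℕ) :
    Tendsto (fun i => lowLevelMass p (f i) k) l (nhds 0) := by
  have hck : 0 < (damping p r ^ 2) ^ k := pow_pos (pow_pos (damping_pos hp hpr hr) 2) k
  refine squeeze_zero (fun i => lowLevelMass_nonneg p (f i) k) (fun i => ?_)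
    (by simpa using h.div_const ((damping p r ^ 2) ^ k))
  rw [le_div_iff₀' hck]
  exact damping_pow_mul_lowLevelMass_le hp hpr hr (f i) k

lemma tendsto_Var_condExp_zero (hp : 0 < p) (hpr : p < r) (hr : r < 1)
    (hf : l.IsBoundedUnder (· ≤ ·) fun i => Var p (f i))
    (h : ∀ k, Tendsto (fun i => lowLevelMass p (f i) k) l (nhds 0)) :
    Tendsto (fun i => Var r (condExp p r (f i))) l (nhds 0) := by
  obtain ⟨C, hC⟩ := hf.eventually_le
  have hc : damping p r ^ 2 < 1 := damping_sq_lt_one hp hpr hr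
  have tail_tendsto : Tendsto (fun k => (damping p r ^ 2) ^ k * C) atTop (nhds 0) := by
    simpa using (tendsto_pow_atTop_nhds_zero_of_lt_one (sq_nonneg _) hc).mul_const C
  refine tendsto_zero_of_forall_le_add (fun i => Var_nonneg (hp.trans hpr).le hr.le _)
    (fun k => ?_) h tail_tendsto
  filter_upwards [hC] with i hi
  exact (Var_condExp_le hp hpr hr (f i) k).trans (by gcongr)

end Limits

theorem clueless_iff_low_level_fourier_vanishes_general {ι : Type*} {l : Filter ι} {N : ι → ℕ}
    {p r : ℝ} (hp : 0 < p) (hpr : p < r) (hr : r < 1) (f : ∀ i, (Fin (N i) → Bool) → ℝ)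
    (hf : l.IsBoundedUnder (· ≤ ·) fun i => Var p (f i)) :
    Tendsto (fun i => Var r (condExp p r (f i))) l (nhds 0) ↔
      ∀ k, Tendsto (fun i => lowLevelMass p (f i) k) l (nhds 0) :=
  ⟨tendsto_lowLevelMass_zero hp hpr hr, tendsto_Var_condExp_zero hp hpr hr hf⟩

/-- `Var_r(E_{p/r}[f_n(ψ·ξ) | ψ]) → 0` iff for every `k`, the
Fourier mass of `f_n` on non-empty sets of size at most `k` tends to `0`. -/
theorem clueless_iff_low_level_fourier_vanishes (p r : ℝ)
    (hp : 0 < p) (hpr : p < r) (hr : r < 1)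
    (f : ∀ n, (Fin n → Bool) → ℝ)
    (hf : ∀ n ω, f n ω ∈ Set.Icc (0 : ℝ) 1) :
    Tendsto (fun n => Var r (condExp p r (f n))) atTop (nhds 0) ↔
      ∀ k : ℕ,
        Tendsto (fun n =>
          ∑ S ∈ Finset.univ.filter (fun S : Finset (Fin n) => S ≠ ∅ ∧ S.card ≤ k),
            fourier p (f n) S ^ 2) atTop (nhds 0) :=
  clueless_iff_low_level_fourier_vanishes_general hp hpr hr f
    (isBoundedUnder_of ⟨(1 - 0) ^ 2, fun n => Var_le_sq_sub hp.le (hpr.trans hr).le (hf n)⟩)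

end PartialObs
end
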